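/- (Unbiasedness of random Fourier features.) Let p be a probability density on ℝᵈ and σ_f > 0, and let κ : ℝᵈ → ℝ satisfy κ(δ) = σ_f² ∫_{ℝᵈ} p(ω) cos(⟨ω, δ⟩) dω for all δ. Let ω be a random vector in ℝᵈ with density p and let b be uniformly distributed on [0, 2π], independent of ω. Then for all x, x' ∈ ℝᵈ: E[ 2σ_f² cos(⟨ω, x⟩ + b) · cos(⟨ω, x'⟩ + b) ] = κ(x − x'). -/

import Mathlib

open MeasureTheory ProbabilityTheory Matrix Real

/-!
Since `2 cos (u + b) cos (v + b) = cos (u - v) + cos (u + v + 2 b)`, the product of two features is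
the desired `cos ⟨W, x - x'⟩` plus a term that winds twice around the circle as `b` runs over
`[0, 2π]`. By independence that term may be averaged over `b` first, with `W` held fixed, and it
then vanishes.
-/

lemma integral_withDensity_ofReal_eq_integral_smul {α F : Type*} [MeasurableSpace α]
    [NormedAddCommGroup F] [NormedSpace ℝ F] {μ : Measure α} {p : α → ℝ}
    (hpm : AEMeasurable p μ) (hp : 0 ≤ᵐ[μ] p) (g : α → F) :
    ∫ a, g a ∂μ.withDensity (fun a => ENNReal.ofReal (p a)) = ∫ a, p a • g a ∂μ := by
  rw [integral_withDensity_eq_integral_toReal_smul₀ hpm.ennreal_ofReal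
    (.of_forall fun _ => ENNReal.ofReal_lt_top)]
  refine integral_congr_ae (hp.mono fun a ha => ?_)
  simp only [ENNReal.toReal_ofReal ha]

lemma integral_cos_add_int_mul (a : ℝ) {k : ℤ} (hk : k ≠ 0) :
    ∫ t in (0 : ℝ)..2 * π, cos (a + k * t) = 0 := by
  rw [intervalIntegral.integral_comp_add_mul cos (Int.cast_ne_zero.mpr hk), integral_cos,
    sin_add_int_mul_two_pi, mul_zero, add_zero, sub_self, smul_zero]

/-- The uniform distribution on `[0, 2π]`, the law of the random phase of a Fourier feature;
it is encoded as Lebesgue measure conditioned on that interval. -/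
noncomputable def uniformPhase : Measure ℝ := volume[|Set.Icc 0 (2 * π)]

lemma uniformPhase_eq_smul_restrict :
    uniformPhase = (ENNReal.ofReal (2 * π))⁻¹ • volume.restrict (Set.Icc 0 (2 * π)) := by
  rw [uniformPhase, ProbabilityTheory.cond, volume_Icc, sub_zero]

instance : IsProbabilityMeasure uniformPhase :=
  cond_isProbabilityMeasure_of_finite (by simp [pi_pos]) measure_Icc_lt_top.ne

lemma integral_uniformPhase_cos_add_int_mul (a : ℝ) {k : ℤ} (hk : k ≠ 0) :
    ∫ t, cos (a + k * t) ∂uniformPhase = 0 := by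
  rw [uniformPhase_eq_smul_restrict, integral_smul_measure, integral_Icc_eq_integral_Ioc,
    ← intervalIntegral.integral_of_le two_pi_pos.le, integral_cos_add_int_mul a hk, smul_zero]

section RandomPhase

variable {Ω : Type*} [MeasurableSpace Ω] {P : Measure Ω} {b : Ω → ℝ}

lemma integrable_cos_comp [IsFiniteMeasure P] {S : Ω → ℝ} (hS : AEMeasurable S P) :
    Integrable (fun ω => cos (S ω)) P :=
  .of_bound hS.cos.aestronglyMeasurable 1 (.of_forall fun _ => abs_cos_le_one _)

lemma integral_cos_add_int_mul_of_indepFun {S : Ω → ℝ} (hS : AEMeasurable S P)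
    (hb : HasLaw b uniformPhase P) (hSb : IndepFun S b P) {k : ℤ} (hk : k ≠ 0) :
    ∫ ω, cos (S ω + k * b ω) ∂P = 0 := by
  have : IsProbabilityMeasure P := hb.isProbabilityMeasure
  have hlaw : HasLaw (fun ω => (S ω, b ω)) ((P.map S).prod uniformPhase) P :=
    (indepFun_iff_hasLaw_prodMk_prod ⟨hS, rfl⟩ hb).mp hSb
  calc ∫ ω, cos (S ω + k * b ω) ∂P
      = ∫ z : ℝ × ℝ, cos (z.1 + k * z.2) ∂(P.map S).prod uniformPhase :=
        hlaw.integral_comp (f := fun z : ℝ × ℝ => cos (z.1 + k * z.2)) (by fun_prop)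
    _ = ∫ s, ∫ t, cos (s + k * t) ∂uniformPhase ∂P.map S :=
        integral_prod _ (integrable_cos_comp (by fun_prop))
    _ = 0 := by simp only [integral_uniformPhase_cos_add_int_mul _ hk, integral_zero]

lemma integral_two_mul_cos_add_mul_cos_add_of_indepFun {U V : Ω → ℝ} (hU : AEMeasurable U P)
    (hV : AEMeasurable V P) (hb : HasLaw b uniformPhase P)
    (hUVb : IndepFun (fun ω => U ω + V ω) b P) :
    ∫ ω, 2 * cos (U ω + b ω) * cos (V ω + b ω) ∂P = ∫ ω, cos (U ω - V ω) ∂P := by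
  have : IsProbabilityMeasure P := hb.isProbabilityMeasure
  have hbm : AEMeasurable b P := hb.aemeasurable
  have product_to_sum (ω : Ω) : 2 * cos (U ω + b ω) * cos (V ω + b ω)
      = cos (U ω - V ω) + cos (U ω + V ω + (2 : ℤ) * b ω) := by
    rw [two_mul_cos_mul_cos]
    ring_nf
  calc ∫ ω, 2 * cos (U ω + b ω) * cos (V ω + b ω) ∂P
      = ∫ ω, cos (U ω - V ω) + cos (U ω + V ω + (2 : ℤ) * b ω) ∂P := by
        simp only [product_to_sum]
    _ = ∫ ω, cos (U ω - V ω) ∂P + ∫ ω, cos (U ω + V ω + (2 : ℤ) * b ω) ∂P :=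
        integral_add (integrable_cos_comp (hU.sub hV)) (integrable_cos_comp (by fun_prop))
    _ = ∫ ω, cos (U ω - V ω) ∂P := by
        rw [integral_cos_add_int_mul_of_indepFun (hU.fun_add hV) hb hUVb two_ne_zero, add_zero]

end RandomPhase

/-- `φ w x` generalizes the phase `⟨w, x⟩`, and the spectral measure `μ` the density `p`. -/
theorem stmt7_general {Ω V E : Type*} [MeasurableSpace Ω] [MeasurableSpace V] [AddGroup E]
    {P : Measure Ω} {μ : Measure V} (φ : V → E →+ ℝ) (hφ : ∀ x, Measurable fun w => φ w x)
    (σf : ℝ) (κ : E → ℝ) (hκ : ∀ δ, κ δ = σf ^ 2 * ∫ w, cos (φ w δ) ∂μ)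
    {W : Ω → V} {b : Ω → ℝ} (hW : HasLaw W μ P) (hb : HasLaw b uniformPhase P)
    (hindep : IndepFun W b P) (x x' : E) :
    ∫ ω, 2 * σf ^ 2 * cos (φ (W ω) x + b ω) * cos (φ (W ω) x' + b ω) ∂P = κ (x - x') := by
  have hφW (y : E) : AEMeasurable (fun ω => φ (W ω) y) P :=
    (hφ y).comp_aemeasurable hW.aemeasurable
  have hsum : IndepFun (fun ω => φ (W ω) x + φ (W ω) x') b P :=
    hindep.comp ((hφ x).add (hφ x')) measurable_id
  calc ∫ ω, 2 * σf ^ 2 * cos (φ (W ω) x + b ω) * cos (φ (W ω) x' + b ω) ∂P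
      = σf ^ 2 * ∫ ω, 2 * cos (φ (W ω) x + b ω) * cos (φ (W ω) x' + b ω) ∂P := by
        rw [← integral_const_mul]
        congr 1 with ω
        ring
    _ = σf ^ 2 * ∫ ω, cos (φ (W ω) (x - x')) ∂P := by
        simp only [integral_two_mul_cos_add_mul_cos_add_of_indepFun (hφW x) (hφW x') hb hsum,
          map_sub]
    _ = σf ^ 2 * ∫ w, cos (φ w (x - x')) ∂μ := by
        rw [← hW.integral_comp (hφ _).cos.aestronglyMeasurable, Function.comp_def]
    _ = κ (x - x') := (hκ _).symm

/-- Unbiasedness of random Fourier features: if `κ(δ) = σ_f² ∫ p(ω) cos⟨ω, δ⟩ dω`, `W` has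
density `p`, and `b` is uniform on `[0, 2π]` independent of `W`, then
`E[2σ_f² cos(⟨W, x⟩ + b) cos(⟨W, x'⟩ + b)] = κ(x − x')`. -/
theorem stmt7 {Ω : Type*} [MeasurableSpace Ω] (P : Measure Ω) [IsProbabilityMeasure P]
    (d : ℕ) (p : (Fin d → ℝ) → ℝ) (hpm : Measurable p) (hp0 : ∀ ω, 0 ≤ p ω)
    (hp1 : ∫ ω : Fin d → ℝ, p ω = 1)
    (σf : ℝ) (hσf : 0 < σf) (κ : (Fin d → ℝ) → ℝ)
    (hκ : ∀ δ : Fin d → ℝ, κ δ = σf ^ 2 * ∫ ω : Fin d → ℝ, p ω * Real.cos (ω ⬝ᵥ δ))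
    (W : Ω → Fin d → ℝ) (b : Ω → ℝ) (hW : Measurable W) (hb : Measurable b)
    (hWlaw : P.map W = volume.withDensity (fun ω => ENNReal.ofReal (p ω)))
    (hblaw : P.map b = (ENNReal.ofReal (2 * Real.pi))⁻¹ •
      volume.restrict (Set.Icc 0 (2 * Real.pi)))
    (hindep : IndepFun W b P)
    (x x' : Fin d → ℝ) :
    ∫ ωb, 2 * σf ^ 2 * Real.cos (W ωb ⬝ᵥ x + b ωb) * Real.cos (W ωb ⬝ᵥ x' + b ωb) ∂P
      = κ (x - x') := by
  have hκ_law (δ : Fin d → ℝ) : κ δ = σf ^ 2 * ∫ ω, Real.cos (ω ⬝ᵥ δ) ∂P.map W := by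
    simp only [hκ, hWlaw, smul_eq_mul,
      integral_withDensity_ofReal_eq_integral_smul hpm.aemeasurable (.of_forall hp0)]
  exact stmt7_general (fun ω => (dotProductBilin ℝ ℝ ω).toAddMonoidHom)
    (fun _ => (continuous_id.dotProduct continuous_const).measurable) σf κ hκ_law
    ⟨hW.aemeasurable, rfl⟩ ⟨hb.aemeasurable, hblaw.trans uniformPhase_eq_smul_restrict.symm⟩
    hindep x x'
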